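/- Let A ∈ ℝ^{m×n} with m ≤ n, with largest and smallest singular values σ₁ and σ_m. Suppose ε > σ₁² and 0 ≤ λ ≤ ε + σ_m². Then the spectral norm of the matrix B := AᵀA − λ(AᵀA + εI)^{−1}AᵀA satisfies ‖B‖₂ = σ₁² − λσ₁²/(ε + σ₁²). -/

import Mathlib

/-!
The matrix `B` is a function of the Gram matrix `M = AᵀA`: an eigenvector of `M` with eigenvalue `t`
is an eigenvector of `B` with eigenvalue `f t = t - λ t / (ε + t)` (`mulVec_B_of_eigen`). Every
eigenvalue `t` of `M` is either `0` or lies in `[σ_m², σ₁²]` (`eigen_bounds`). On that interval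
`λ ≤ ε + σ_m² ≤ ε + t` makes `f t` nonnegative, and it makes `f` nondecreasing since
`λ ε ≤ (ε + t)²`; hence `0 ≤ f t ≤ f (σ₁²)` on the spectrum (`f_bounds`). Expanding in an
orthonormal eigenbasis of `M` gives `‖B v‖ ≤ f (σ₁²) ‖v‖`. Equality holds at any vector where `‖A v‖`
attains `σ₁ ‖v‖`, because such a vector is an eigenvector of `M` for `σ₁²` (`maximizer_eigen`).
-/

open Matrix Filter Topology

/-- Euclidean (ℓ₂) norm of a vector in ℝ^n. -/
noncomputable def norm2 {n : ℕ} (x : Fin n → ℝ) : ℝ := Real.sqrt (∑ i, x i ^ 2)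

/-- Euclidean inner product. -/
def dot {n : ℕ} (u v : Fin n → ℝ) : ℝ := ∑ i, u i * v i

/-- Support of a vector. -/
def supp {n : ℕ} (x : Fin n → ℝ) : Set (Fin n) := {i | x i ≠ 0}

/-- δ ∈ (0,1) is a restricted isometry constant of order q for A. -/
def IsRIC {m n : ℕ} (A : Matrix (Fin m) (Fin n) ℝ) (q : ℕ) (δ : ℝ) : Prop :=
  0 < δ ∧ δ < 1 ∧
    ∀ x : Fin n → ℝ, (supp x).ncard ≤ q →
      (1 - δ) * norm2 x ^ 2 ≤ norm2 (A.mulVec x) ^ 2 ∧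
      norm2 (A.mulVec x) ^ 2 ≤ (1 + δ) * norm2 x ^ 2

/-- σ is the largest singular value (spectral norm) of A: it bounds ‖Av‖₂/‖v‖₂
and this bound is attained. -/
def IsMaxSingularValue {m n : ℕ} (A : Matrix (Fin m) (Fin n) ℝ) (σ : ℝ) : Prop :=
  0 ≤ σ ∧ (∀ v : Fin n → ℝ, norm2 (A.mulVec v) ≤ σ * norm2 v) ∧
    ∃ v : Fin n → ℝ, v ≠ 0 ∧ norm2 (A.mulVec v) = σ * norm2 v

/-- For m ≤ n, σ is the smallest singular value of A, i.e. σ² is the smallest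
eigenvalue of A Aᵀ: σ is the infimum of ‖Aᵀu‖₂/‖u‖₂ and it is attained. -/
def IsMinSingularValue {m n : ℕ} (A : Matrix (Fin m) (Fin n) ℝ) (σ : ℝ) : Prop :=
  0 ≤ σ ∧ (∀ u : Fin m → ℝ, σ * norm2 u ≤ norm2 (Aᵀ.mulVec u)) ∧
    ∃ u : Fin m → ℝ, u ≠ 0 ∧ norm2 (Aᵀ.mulVec u) = σ * norm2 u

/-- w is a hard k-thresholding of z with associated index set S*. -/
def IsHardThresholding {n : ℕ} (k : ℕ) (z w : Fin n → ℝ) (S : Set (Fin n)) : Prop :=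
  S.ncard = k ∧ (∀ i ∈ S, w i = z i) ∧ (∀ i ∉ S, w i = 0) ∧
    ∀ i ∈ S, ∀ j ∉ S, |z j| ≤ |z i|

lemma norm2_nonneg' {n : ℕ} (x : Fin n → ℝ) : 0 ≤ norm2 x := Real.sqrt_nonneg _

lemma norm2_sq {n : ℕ} (x : Fin n → ℝ) : norm2 x ^ 2 = x ⬝ᵥ x := by
  unfold norm2
  rw [Real.sq_sqrt (Finset.sum_nonneg fun i _ => sq_nonneg _)]
  simp [dotProduct, sq]

lemma norm2_eq_norm {n : ℕ} (x : Fin n → ℝ) : norm2 x = ‖WithLp.toLp 2 x‖ := by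
  simp [norm2, EuclideanSpace.norm_eq]

lemma norm2_smul {n : ℕ} (c : ℝ) (x : Fin n → ℝ) : norm2 (c • x) = |c| * norm2 x := by
  rw [norm2_eq_norm, norm2_eq_norm, WithLp.toLp_smul, norm_smul, Real.norm_eq_abs]

lemma dot_self_pos {n : ℕ} {x : Fin n → ℝ} (hx : x ≠ 0) : 0 < x ⬝ᵥ x := by
  refine lt_of_le_of_ne ?_ (fun h => hx (dotProduct_self_eq_zero.1 h.symm))
  rw [← norm2_sq]; positivity

/-- A matrix that is diagonal in an orthonormal basis, with all eigenvalues at most `K` in absolute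
value, has operator norm at most `K`. -/
lemma norm2_mulVec_le_of_eigenbasis {n : ℕ} (B : Matrix (Fin n) (Fin n) ℝ)
    (b : OrthonormalBasis (Fin n) ℝ (EuclideanSpace ℝ (Fin n))) (μ : Fin n → ℝ) (K : ℝ)
    (hK : 0 ≤ K) (hB : ∀ i, B *ᵥ (b i).ofLp = μ i • (b i).ofLp) (hμ : ∀ i, |μ i| ≤ K)
    (v : Fin n → ℝ) : norm2 (B *ᵥ v) ≤ K * norm2 v := by
  set c := b.repr (WithLp.toLp 2 v) with hc
  have hv : v = ∑ i, c i • (b i).ofLp := by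
    have := congrArg WithLp.ofLp (b.sum_repr (WithLp.toLp 2 v))
    simpa using this.symm
  have hBv : WithLp.toLp 2 (B *ᵥ v) = ∑ i, (μ i * c i) • b i := by
    apply WithLp.ofLp_injective 2
    conv_lhs => rw [hv]
    simp only [WithLp.ofLp_sum, WithLp.ofLp_smul, Matrix.mulVec_sum, Matrix.mulVec_smul, hB,
      smul_smul]
    exact Finset.sum_congr rfl fun i _ => by rw [mul_comm]
  have hrepr : b.repr (WithLp.toLp 2 (B *ᵥ v)) = WithLp.toLp 2 (fun i => μ i * c i) := by
    rw [← b.repr.apply_symm_apply (WithLp.toLp 2 (fun i => μ i * c i)), hBv,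
      ← b.sum_repr_symm]
  rw [norm2_eq_norm, norm2_eq_norm, ← b.repr.norm_map, ← b.repr.norm_map (WithLp.toLp 2 v),
    hrepr, ← hc]
  refine abs_le_of_sq_le_sq' ?_ (by positivity) |>.2
  rw [mul_pow, EuclideanSpace.norm_sq_eq, EuclideanSpace.norm_sq_eq, Finset.mul_sum]
  refine Finset.sum_le_sum fun i _ => ?_
  simp only [norm_mul, mul_pow, Real.norm_eq_abs]
  have := hμ i
  gcongr

lemma gram_dot {m n : ℕ} (A : Matrix (Fin m) (Fin n) ℝ) (v : Fin n → ℝ) :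
    v ⬝ᵥ ((Aᵀ * A) *ᵥ v) = norm2 (A *ᵥ v) ^ 2 := by
  rw [norm2_sq, ← Matrix.mulVec_mulVec, Matrix.dotProduct_mulVec, Matrix.vecMul_transpose]

/-- Eigenvalues of `AᵀA` lie in `{0} ∪ [σ_m², σ₁²]`: for a nonzero one, with eigenvector `v`, the
lower bound comes from testing `σ_m` on `A v`. -/
lemma eigen_bounds {m n : ℕ} (A : Matrix (Fin m) (Fin n) ℝ) {σ1 σm : ℝ}
    (hσ1 : IsMaxSingularValue A σ1) (hσm : IsMinSingularValue A σm) {t : ℝ} {v : Fin n → ℝ}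
    (hv : v ≠ 0) (h : (Aᵀ * A) *ᵥ v = t • v) :
    0 ≤ t ∧ t ≤ σ1 ^ 2 ∧ (t = 0 ∨ σm ^ 2 ≤ t) := by
  have hpos := dot_self_pos hv
  have hg := gram_dot A v
  rw [h, dotProduct_smul, smul_eq_mul] at hg
  have ht : 0 ≤ t := by
    by_contra! hlt
    nlinarith [sq_nonneg (norm2 (A *ᵥ v))]
  refine ⟨ht, ?_, ?_⟩
  · have h1 := pow_le_pow_left₀ (norm2_nonneg' _) (hσ1.2.1 v) 2
    rw [← hg, mul_pow, norm2_sq] at h1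
    exact le_of_mul_le_mul_right h1 hpos
  · rcases ht.eq_or_lt with h0 | h0
    · exact Or.inl h0.symm
    · right
      have h1 := pow_le_pow_left₀ (mul_nonneg hσm.1 (norm2_nonneg' _)) (hσm.2.1 (A *ᵥ v)) 2
      rw [Matrix.mulVec_mulVec, h, mul_pow, ← hg, norm2_smul, mul_pow, sq_abs, norm2_sq] at h1
      refine le_of_mul_le_mul_right ?_ (mul_pos h0 hpos)
      linarith

/-- Bounds for `f t = t - λ t / (ε + t)` on the spectrum, with `s = σ_m²` and `S = σ₁²`. Since `S`
is itself an eigenvalue of the Gram matrix, `S = 0 ∨ s ≤ S` is available from `eigen_bounds`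
without comparing `σ_m` and `σ₁`. -/
lemma f_bounds {ε lam s S t : ℝ} (hε : 0 < ε) (hlam : lam ≤ ε + s)
    (hsS : S = 0 ∨ s ≤ S) (hS : 0 ≤ S) (ht : 0 ≤ t) (htS : t ≤ S) (h : t = 0 ∨ s ≤ t) :
    0 ≤ t - lam * t / (ε + t) ∧ t - lam * t / (ε + t) ≤ S - lam * S / (ε + S) := by
  have e : ∀ x, 0 ≤ x → x - lam * x / (ε + x) = x * (ε + x - lam) / (ε + x) := by
    intro x hx
    have : ε + x ≠ 0 := by positivity
    field_simp
  have nn : ∀ x, 0 ≤ x → s ≤ x → 0 ≤ x - lam * x / (ε + x) := by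
    intro x hx hsx
    rw [e x hx]
    exact div_nonneg (mul_nonneg hx (by linarith)) (by linarith)
  rcases hsS with rfl | hsS
  · obtain rfl : t = 0 := le_antisymm htS ht
    simp
  rcases h with rfl | h
  · simpa using nn S hS hsS
  · refine ⟨nn t ht h, ?_⟩
    have h1 : 0 < ε + t := by positivity
    have h2 : 0 < ε + S := by positivity
    have h3 : S - lam * S / (ε + S) - (t - lam * t / (ε + t))
        = (S - t) * ((ε + S) * (ε + t) - lam * ε) / ((ε + S) * (ε + t)) := by
      field_simp
      ring
    have h4 : lam * ε ≤ (ε + t) * (ε + S) :=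
      mul_le_mul (by linarith) (by linarith) hε.le h1.le
    have h5 : 0 ≤ (S - t) * ((ε + S) * (ε + t) - lam * ε) / ((ε + S) * (ε + t)) :=
      div_nonneg (mul_nonneg (by linarith) (by linarith)) (by positivity)
    linarith

lemma mulVec_B_of_eigen {m n : ℕ} (A : Matrix (Fin m) (Fin n) ℝ) {ε : ℝ} (hε : 0 < ε) (lam : ℝ)
    {t : ℝ} (ht : 0 ≤ t) {v : Fin n → ℝ} (h : (Aᵀ * A) *ᵥ v = t • v) :
    (Aᵀ * A - lam • ((Aᵀ * A + ε • (1 : Matrix (Fin n) (Fin n) ℝ))⁻¹ * (Aᵀ * A))) *ᵥ v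
      = (t - lam * t / (ε + t)) • v := by
  have hpd : (Aᵀ * A + ε • (1 : Matrix (Fin n) (Fin n) ℝ)).PosDef := by
    have h1 : (Aᵀ * A).PosSemidef := by
      simpa using Matrix.posSemidef_conjTranspose_mul_self A
    exact Matrix.PosDef.posSemidef_add h1 (Matrix.PosDef.one.smul hε)
  set R := Aᵀ * A + ε • (1 : Matrix (Fin n) (Fin n) ℝ) with hR
  have hdet : IsUnit R.det := hpd.det_pos.ne'.isUnit
  have hRv : R *ᵥ v = (ε + t) • v := by
    rw [hR, Matrix.add_mulVec, h, Matrix.smul_mulVec, Matrix.one_mulVec, add_smul, add_comm]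
  have hne : ε + t ≠ 0 := by positivity
  have hinv : R⁻¹ *ᵥ v = (ε + t)⁻¹ • v := by
    have h2 : R⁻¹ *ᵥ (R *ᵥ v) = v := by
      rw [Matrix.mulVec_mulVec, Matrix.nonsing_inv_mul _ hdet, Matrix.one_mulVec]
    rw [hRv, Matrix.mulVec_smul] at h2
    rw [eq_inv_smul_iff₀ hne, h2]
  rw [Matrix.sub_mulVec, Matrix.smul_mulVec, ← Matrix.mulVec_mulVec v R⁻¹, h, Matrix.mulVec_smul, hinv,
    smul_smul, smul_smul, ← sub_smul]
  congr 1

/-- If `‖M v‖ ≤ σ₁² ‖v‖` for `M = AᵀA` and `‖A v‖ = σ₁ ‖v‖`, then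
`‖M v - σ₁² v‖² = ‖M v‖² - 2 σ₁² ‖A v‖² + σ₁⁴ ‖v‖² ≤ 0`. -/
lemma maximizer_eigen {m n : ℕ} (A : Matrix (Fin m) (Fin n) ℝ) {σ1 : ℝ} {v : Fin n → ℝ}
    (hM : norm2 ((Aᵀ * A) *ᵥ v) ≤ σ1 ^ 2 * norm2 v) (hv : norm2 (A *ᵥ v) = σ1 * norm2 v) :
    (Aᵀ * A) *ᵥ v = σ1 ^ 2 • v := by
  have hg := gram_dot A v
  rw [hv, mul_pow, norm2_sq] at hg
  have h1 := pow_le_pow_left₀ (norm2_nonneg' _) hM 2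
  rw [mul_pow, norm2_sq, norm2_sq] at h1
  set w := (Aᵀ * A) *ᵥ v
  rw [← sub_eq_zero, ← dotProduct_self_eq_zero]
  refine le_antisymm ?_ (by rw [← norm2_sq]; positivity)
  have h2 : (w - σ1 ^ 2 • v) ⬝ᵥ (w - σ1 ^ 2 • v)
      = w ⬝ᵥ w - 2 * σ1 ^ 2 * (v ⬝ᵥ w) + (σ1 ^ 2) ^ 2 * (v ⬝ᵥ v) := by
    simp only [sub_dotProduct, dotProduct_sub, smul_dotProduct, dotProduct_smul, smul_eq_mul,
      dotProduct_comm w v]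
    ring
  rw [h2, hg]
  linarith

/-- spectral norm of B = AᵀA − λ(AᵀA + εI)⁻¹AᵀA. -/
theorem stmt_10 {m n : ℕ} (hmn : m ≤ n) (A : Matrix (Fin m) (Fin n) ℝ)
    (σ1 σm : ℝ) (hσ1 : IsMaxSingularValue A σ1) (hσm : IsMinSingularValue A σm)
    (ε lam : ℝ) (hε : σ1 ^ 2 < ε) (hlam0 : 0 ≤ lam) (hlam : lam ≤ ε + σm ^ 2) :
    IsMaxSingularValue
      (Aᵀ * A - lam • ((Aᵀ * A + ε • (1 : Matrix (Fin n) (Fin n) ℝ))⁻¹ * (Aᵀ * A)))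
      (σ1 ^ 2 - lam * σ1 ^ 2 / (ε + σ1 ^ 2)) := by
  have hε0 : 0 < ε := (sq_nonneg σ1).trans_lt hε
  have hherm : (Aᵀ * A).IsHermitian := by
    simpa using Matrix.isHermitian_conjTranspose_mul_self A
  set b := hherm.eigenvectorBasis
  set t := hherm.eigenvalues
  have hb : ∀ i, (Aᵀ * A) *ᵥ (b i).ofLp = t i • (b i).ofLp := hherm.mulVec_eigenvectorBasis
  have hb0 : ∀ i, (b i).ofLp ≠ 0 := fun i h =>
    b.toBasis.ne_zero i (by simpa using h)
  have ht := fun i => eigen_bounds A hσ1 hσm (hb0 i) (hb i)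
  obtain ⟨v, hv0, hv⟩ := hσ1.2.2
  have hMv : norm2 ((Aᵀ * A) *ᵥ v) ≤ σ1 ^ 2 * norm2 v :=
    norm2_mulVec_le_of_eigenbasis _ b t _ (sq_nonneg _) hb
      (fun i => by rw [abs_of_nonneg (ht i).1]; exact (ht i).2.1) v
  have hev := maximizer_eigen A hMv hv
  have hsS := (eigen_bounds A hσ1 hσm hv0 hev).2.2
  have hf := fun i => f_bounds hε0 hlam hsS (sq_nonneg σ1) (ht i).1 (ht i).2.1 (ht i).2.2
  have hf1 := f_bounds hε0 hlam hsS (sq_nonneg σ1) (sq_nonneg σ1) le_rfl hsS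
  refine ⟨hf1.1, ?_, v, hv0, ?_⟩
  · exact norm2_mulVec_le_of_eigenbasis _ b (fun i => t i - lam * t i / (ε + t i)) _ hf1.1
      (fun i => mulVec_B_of_eigen A hε0 lam (ht i).1 (hb i))
      (fun i => by rw [abs_of_nonneg (hf i).1]; exact (hf i).2)
  · rw [mulVec_B_of_eigen A hε0 lam (sq_nonneg σ1) hev, norm2_smul, abs_of_nonneg hf1.1]
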